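/- (i) If κ is a strong limit cardinal with κ^{ℵ₀} > κ, then there is no compact linearly ordered topological space of cardinality κ in which all nonempty open subsets have the same cardinality. (ii) If κ is a singular cardinal, then there is no linearly ordered continuum X with ŵ(X) = κ and |X| < κ^{ℵ₀}. -/

import Mathlib

/-!
Both parts come down to the inequality `κ ^ ℵ₀ ≤ |X|` for a compact linearly ordered space `X`,
where `κ` is a limit cardinal and every nonempty open convex subset of `X` is infinite and, if `κ`
is uncountable, has density at least `κ` (`power_aleph0_le_mk`).

In a linearly ordered space the density is at most the successor of the cellularity
(`exists_dense_mk_le`). Since `κ` is a limit cardinal, every nonempty open set therefore contains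
`θ` disjoint nonempty open sets for each `θ < κ`. By compactness, a tree of open sets of height `ω`
which splits into `θ n` disjoint parts at level `n`, with closures shrinking along each branch,
yields `∏ θ n` points (`prod_le_mk_of_cellular`). Finally `κ ^ ℵ₀` is bounded by any upper bound of
such products: if `cof κ = ω`, König's theorem makes `κ` at most one of them, and if `cof κ > ω`,
every countable sequence in `κ` is bounded (`power_aleph0_le_of_prod_le`).

The density hypothesis holds in (i) because a Hausdorff space with a dense set of size `δ` has at
most `2 ^ 2 ^ δ` points, which is below the strong limit `κ` when `δ` is (`mk_le_of_dense`). It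
holds in (ii) because a connected ordered space is densely ordered, so that its weight is at most
its density or `ℵ₀` (`wt_le_of_dense`); a singular cardinal is an uncountable limit cardinal since
`ℵ₀` and successors of infinite cardinals are regular.
-/

universe u

open Cardinal Topology

/-- The weight of a topological space: the least cardinality of a basis for its topology. -/
noncomputable def wt (X : Type u) [TopologicalSpace X] : Cardinal.{u} :=
  sInf { c : Cardinal.{u} | ∃ B : Set (Set X), TopologicalSpace.IsTopologicalBasis B ∧ #B = c }

/-- `hatWt X` is the smallest weight of a nonempty open subspace of `X`. -/
noncomputable def hatWt (X : Type u) [TopologicalSpace X] : Cardinal.{u} :=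
  sInf { c : Cardinal.{u} | ∃ U : Set X, IsOpen U ∧ U.Nonempty ∧ wt U = c }

/-- A linearly ordered topological space: the topology is the order topology of some
linear order. -/
def IsLOTS (X : Type u) [t : TopologicalSpace X] : Prop :=
  ∃ l : LinearOrder X, @OrderTopology X t l.toPartialOrder.toPreorder

/-- A continuum: a compact connected Hausdorff space with more than one point. -/
def IsContinuum (X : Type u) [TopologicalSpace X] : Prop :=
  CompactSpace X ∧ ConnectedSpace X ∧ T2Space X ∧ Nontrivial X

section

open Set Order

/-! ### Density and cellularity of linearly ordered spaces -/

theorem isOpen_ordConnectedComponent {X : Type u} [LinearOrder X] [TopologicalSpace X]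
    [OrderTopology X] {S : Set X} (hS : IsOpen S) (p : X) :
    IsOpen (ordConnectedComponent S p) := by
  rw [isOpen_iff_mem_nhds]
  intro y hy
  rw [ordConnectedComponent_eq hy, ordConnectedComponent_mem_nhds]
  exact hS.mem_nhds (ordConnectedComponent_subset hy)

/-- The hypothesis `H` says that the cellularity of `X` is at most `θ`; the convex components of an
open set form a cellular family. -/
theorem mk_ordConnectedSection_le {X : Type u} [LinearOrder X] [TopologicalSpace X]
    [OrderTopology X] {θ : Cardinal.{u}}
    (H : ∀ (K : Type u) (W : K → Set X), (∀ k, IsOpen (W k)) → (∀ k, (W k).Nonempty) →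
      Pairwise (fun k l => Disjoint (W k) (W l)) → #K ≤ θ)
    {S : Set X} (hS : IsOpen S) : #(ordConnectedSection S) ≤ θ := by
  refine H _ (fun k : ordConnectedSection S => ordConnectedComponent S k)
    (fun k => isOpen_ordConnectedComponent hS _)
    (fun k => nonempty_ordConnectedComponent.2 (ordConnectedSection_subset k.2)) ?_
  intro k l hkl
  rw [Set.disjoint_left]
  intro z hk hl
  exact hkl (Subtype.ext (eq_of_mem_ordConnectedSection_of_uIcc_subset k.2 l.2
    (mem_ordConnectedComponent_trans hk (mem_ordConnectedComponent_comm.1 hl))))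

/-- The density of a linearly ordered space is at most the successor of its cellularity. Stage `j`
of a recursion along a well-order of type `θ⁺ · 3` picks a point in every convex component of the
complement of the closure of the points picked so far; if the result were not dense, the components
of a point outside its closure would shrink often enough to yield `θ⁺` disjoint open sets. -/
theorem exists_dense_mk_le {X : Type u} [LinearOrder X] [TopologicalSpace X]
    [OrderTopology X] {θ : Cardinal.{u}} (hθ : ℵ₀ ≤ θ)
    (H : ∀ (K : Type u) (W : K → Set X), (∀ k, IsOpen (W k)) → (∀ k, (W k).Nonempty) →
      Pairwise (fun k l => Disjoint (W k) (W l)) → #K ≤ θ) :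
    ∃ D : Set X, Dense D ∧ #D ≤ succ θ := by
  classical
  let K : Type u := (succ θ).ord.ToType
  have hK : #K = succ θ := mk_ord_toType _
  let J : Type u := K ×ₗ Fin 3
  have hJ : #J ≤ succ θ := by
    have h1 : #J = #(K × Fin 3) := mk_congr ofLex
    rw [h1, mk_prod, hK]
    simp only [mk_fin, lift_uzero, lift_natCast]
    exact mul_le_of_le (hθ.trans (le_succ θ)) le_rfl
      ((natCast_lt_aleph0 (n := 3)).le.trans (hθ.trans (le_succ θ)))
  let D : J → Set X := (wellFounded_lt (α := J)).fix
    (fun j ih => ordConnectedSection (closure (⋃ (i : J) (h : i < j), ih i h))ᶜ)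
  let S : J → Set X := fun j => (closure (⋃ (i : J) (_ : i < j), D i))ᶜ
  have hD : ∀ j, D j = ordConnectedSection (S j) := fun j =>
    WellFounded.fix_eq (wellFounded_lt (α := J)) _ j
  have hSo : ∀ j, IsOpen (S j) := fun j => isClosed_closure.isOpen_compl
  refine ⟨⋃ j, D j, ?_, ?_⟩
  swap
  · calc #(⋃ j, D j) ≤ sum fun j => #(D j) := mk_iUnion_le_sum_mk
      _ ≤ sum fun _ : J => succ θ := sum_le_sum _ _ fun j => by
          rw [hD j]
          exact (mk_ordConnectedSection_le H (hSo j)).trans (le_succ θ)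
      _ = #J * succ θ := by simp
      _ ≤ succ θ := mul_le_of_le (hθ.trans (le_succ θ)) hJ le_rfl
  by_contra hnd
  obtain ⟨p, hp⟩ : ∃ p, p ∉ closure (⋃ j, D j) := by
    simpa [Dense] using hnd
  have hpS : ∀ j, p ∈ S j := fun j hj =>
    hp (closure_mono (iUnion₂_subset fun i _ => subset_iUnion D i) hj)
  let C : J → Set X := fun j => ordConnectedComponent (S j) p
  let x : J → X := fun j => ordConnectedProj (S j) ⟨p, hpS j⟩
  have hxD : ∀ j, x j ∈ D j := fun j => by rw [hD j]; exact mem_range_self _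
  have hxC : ∀ j, x j ∈ C j := fun j => ordConnectedProj_mem_ordConnectedComponent (S j) ⟨p, hpS j⟩
  have hS_anti : ∀ {i j}, i ≤ j → S j ⊆ S i := fun {i j} hij =>
    compl_subset_compl.2 (closure_mono (iUnion₂_subset fun k hk =>
      subset_iUnion₂_of_subset k (hk.trans_le hij) subset_rfl))
  have hC_anti : ∀ {i j}, i ≤ j → C j ⊆ C i := fun {i j} hij y hy =>
    Subset.trans hy (hS_anti hij)
  have hxS : ∀ {i j}, i < j → x i ∉ S j := fun {i j} hij h =>
    h (subset_closure (mem_iUnion₂.2 ⟨i, hij, hxD i⟩))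
  have hxp : ∀ i, x i ≠ p := fun i h =>
    hp (h ▸ subset_closure (mem_iUnion.2 ⟨i, hxD i⟩))
  have hlt : ∀ {i j y}, i < j → y ∈ C j → x i < p → x i < y := by
    intro i j y hij hy hip
    by_contra! hyx
    exact hxS hij (hy (Icc_subset_uIcc' ⟨hyx, hip.le⟩))
  have hgt : ∀ {i j y}, i < j → y ∈ C j → p < x i → y < x i := by
    intro i j y hij hy hip
    by_contra! hyx
    exact hxS hij (hy (Icc_subset_uIcc ⟨hip.le, hyx⟩))
  -- Of the three points picked at the stages over `k`, two lie on the same side of `p`; the earlier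
  -- of these is separated by the later one from all the later components of `p`.
  have hW : ∀ k : K, ∃ W : Set X, IsOpen W ∧ W.Nonempty ∧ W ⊆ C (toLex (k, 0)) ∧
      ∀ l, k < l → Disjoint W (C (toLex (l, 0))) := by
    intro k
    have hlex : ∀ (l : K) (a b : Fin 3), k < l → (toLex (k, a) : J) < toLex (l, b) :=
      fun l a b h => Prod.Lex.toLex_lt_toLex.2 (Or.inl h)
    have hlex' : ∀ {a b : Fin 3}, a < b → (toLex (k, a) : J) < toLex (k, b) :=
      fun {a b} h => Prod.Lex.toLex_lt_toLex.2 (Or.inr ⟨rfl, h⟩)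
    have hlex0 : ∀ a : Fin 3, (toLex (k, 0) : J) ≤ toLex (k, a) :=
      fun a => Prod.Lex.toLex_le_toLex.2 (Or.inr ⟨rfl, Fin.zero_le a⟩)
    obtain ⟨a, b, hab, hside⟩ : ∃ a b : Fin 3, a < b ∧
        ((x (toLex (k, a)) < p ∧ x (toLex (k, b)) < p) ∨
          (p < x (toLex (k, a)) ∧ p < x (toLex (k, b)))) := by
      have h01 : (0 : Fin 3) < 1 := by decide
      have h02 : (0 : Fin 3) < 2 := by decide
      have h12 : (1 : Fin 3) < 2 := by decide
      rcases lt_or_gt_of_ne (hxp (toLex (k, 0))) with h0 | h0 <;>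
      rcases lt_or_gt_of_ne (hxp (toLex (k, 1))) with h1 | h1 <;>
      rcases lt_or_gt_of_ne (hxp (toLex (k, 2))) with h2 | h2
      · exact ⟨0, 1, h01, Or.inl ⟨h0, h1⟩⟩
      · exact ⟨0, 1, h01, Or.inl ⟨h0, h1⟩⟩
      · exact ⟨0, 2, h02, Or.inl ⟨h0, h2⟩⟩
      · exact ⟨1, 2, h12, Or.inr ⟨h1, h2⟩⟩
      · exact ⟨1, 2, h12, Or.inl ⟨h1, h2⟩⟩
      · exact ⟨0, 2, h02, Or.inr ⟨h0, h2⟩⟩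
      · exact ⟨0, 1, h01, Or.inr ⟨h0, h1⟩⟩
      · exact ⟨0, 1, h01, Or.inr ⟨h0, h1⟩⟩
    rcases hside with ⟨ha, hb⟩ | ⟨ha, hb⟩
    · refine ⟨C (toLex (k, 0)) ∩ Iio (x (toLex (k, b))),
        (isOpen_ordConnectedComponent (hSo _) p).inter isOpen_Iio,
        ⟨x (toLex (k, a)), hC_anti (hlex0 a) (hxC _), hlt (hlex' hab) (hxC _) ha⟩,
        inter_subset_left, fun l hl => Set.disjoint_left.2 fun y hy hy' => ?_⟩
      exact lt_asymm hy.2 (hlt (hlex l b 0 hl) hy' hb)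
    · refine ⟨C (toLex (k, 0)) ∩ Ioi (x (toLex (k, b))),
        (isOpen_ordConnectedComponent (hSo _) p).inter isOpen_Ioi,
        ⟨x (toLex (k, a)), hC_anti (hlex0 a) (hxC _), hgt (hlex' hab) (hxC _) ha⟩,
        inter_subset_left, fun l hl => Set.disjoint_left.2 fun y hy hy' => ?_⟩
      exact lt_asymm hy.2 (hgt (hlex l b 0 hl) hy' hb)
  choose W hWo hWn hWC hWd using hW
  have := H K W hWo hWn (by
    intro k l hkl
    rcases lt_or_gt_of_ne hkl with h | h
    · exact (hWd k l h).mono_right (hWC l)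
    · exact ((hWd l k h).mono_right (hWC k)).symm)
  rw [hK] at this
  exact (lt_succ θ).not_ge this

theorem mk_le_of_dense {X : Type u} [TopologicalSpace X] [T2Space X] {D : Set X} (hD : Dense D) :
    #X ≤ 2 ^ (2 ^ #D : Cardinal.{u}) := by
  -- A point is determined by the trace on `D` of its neighbourhood filter.
  have h : Function.Injective
      (fun x : X => {s : Set D | s ∈ Filter.comap (Subtype.val : D → X) (𝓝 x)}) := by
    intro x y hxy
    have hxy' : Filter.comap (Subtype.val : D → X) (𝓝 x) = Filter.comap Subtype.val (𝓝 y) :=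
      Filter.ext fun s => Set.ext_iff.1 hxy s
    by_contra hne
    have hd := Filter.disjoint_comap (m := (Subtype.val : D → X)) (disjoint_nhds_nhds.2 hne)
    rw [← hxy', disjoint_self] at hd
    exact ((mem_closure_iff_comap_neBot).1 (hD x)).ne hd
  calc #X ≤ #(Set (Set D)) := mk_le_of_injective h
    _ = _ := by rw [mk_set, mk_set]

theorem wt_le_of_dense {X : Type u} [LinearOrder X] [TopologicalSpace X] [OrderTopology X]
    [DenselyOrdered X] {D : Set X} (hD : Dense D) : wt X ≤ max ℵ₀ #D := by
  classical
  have hb := TopologicalSpace.isTopologicalBasis_of_subbasis hD.topology_eq_generateFrom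
  have hle : wt X ≤ #((fun f => ⋂₀ f) ''
      {f : Set (Set X) | f.Finite ∧ f ⊆ Ioi '' D ∪ Iio '' D}) := csInf_le' ⟨_, hb, rfl⟩
  refine hle.trans ?_
  set s : Set (Set X) := Ioi '' D ∪ Iio '' D with hs
  have hsc : #s ≤ max ℵ₀ #D := by
    refine (mk_union_le _ _).trans (add_le_of_le (le_max_left _ _) ?_ ?_) <;>
    exact mk_image_le.trans (le_max_right _ _)
  have h1 : ((fun f => ⋂₀ f) '' {f : Set (Set X) | f.Finite ∧ f ⊆ s}) ⊆
      range (fun F : Finset s => ⋂₀ (Subtype.val '' (F : Set s))) := by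
    rintro _ ⟨f, ⟨hf, hfs⟩, rfl⟩
    refine ⟨(hf.preimage Subtype.val_injective.injOn).toFinset, ?_⟩
    simp [Subtype.image_preimage_coe, inter_eq_right.2 hfs]
  refine (mk_le_mk_of_subset h1).trans (mk_range_le.trans ?_)
  rcases finite_or_infinite s with h | h
  · exact (mk_le_aleph0 (α := Finset s)).trans (le_max_left _ _)
  · rw [mk_finset_of_infinite]; exact hsc

/-- A connected linearly ordered space has no jumps. -/
theorem denselyOrdered_of_connected {X : Type u} [LinearOrder X] [TopologicalSpace X]
    [OrderTopology X] [ConnectedSpace X] : DenselyOrdered X := by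
  refine ⟨fun a b hab => ?_⟩
  by_contra! h
  have he : Iic a = Iio b := by
    ext y
    exact ⟨fun hy => lt_of_le_of_lt hy hab, fun hy => not_lt.1 fun hay => (h y hay).not_gt hy⟩
  have hc : IsClopen (Iic a) := ⟨isClosed_Iic, he ▸ isOpen_Iio⟩
  rcases isClopen_iff.1 hc with h0 | h0
  · exact (h0 ▸ (le_refl a : a ∈ Iic a) : a ∈ (∅ : Set X))
  · exact absurd ((h0 ▸ mem_univ b : b ∈ Iic a)) (not_le.2 hab)

/-! ### Trees of open sets in compact spaces -/

/-- If every nonempty open set of a compact Hausdorff space contains `θ n` disjoint nonempty open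
sets, for each `n`, then the branches of a tree of open sets give `∏ θ n` distinct points. -/
theorem prod_le_mk_of_cellular {X : Type u} [TopologicalSpace X] [CompactSpace X] [T2Space X]
    [Nonempty X] (K : ℕ → Type u)
    (h : ∀ (n : ℕ) (U : Set X), IsOpen U → U.Nonempty → ∃ W : K n → Set X,
      (∀ k, IsOpen (W k)) ∧ (∀ k, (W k).Nonempty) ∧ (∀ k, W k ⊆ U) ∧
      Pairwise (fun k l => Disjoint (W k) (W l))) :
    #(∀ n, K n) ≤ #X := by
  have h' : ∀ (n : ℕ) (U : {U : Set X // IsOpen U ∧ U.Nonempty}),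
      ∃ W : K n → {U : Set X // IsOpen U ∧ U.Nonempty},
      (∀ k, closure (W k).1 ⊆ U.1) ∧
      ∀ k l, k ≠ l → Disjoint (closure (W k).1) (closure (W l).1) := by
    rintro n ⟨U, hU, hUn⟩
    obtain ⟨W, hWo, hWn, hWU, hWd⟩ := h n U hU hUn
    have hV : ∀ k, ∃ V : {U : Set X // IsOpen U ∧ U.Nonempty}, closure V.1 ⊆ W k := by
      intro k
      obtain ⟨y, hy⟩ := hWn k
      obtain ⟨t, ht, htc, htW⟩ := exists_mem_nhds_isClosed_subset ((hWo k).mem_nhds hy)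
      exact ⟨⟨interior t, isOpen_interior, y, mem_interior_iff_mem_nhds.2 ht⟩,
        (closure_minimal interior_subset htc).trans htW⟩
    choose V hV using hV
    exact ⟨V, fun k => (hV k).trans (hWU k), fun k l hkl => (hWd hkl).mono (hV k) (hV l)⟩
  choose W hWU hWd using h'
  let T : (∀ n, K n) → ℕ → {U : Set X // IsOpen U ∧ U.Nonempty} := fun f n =>
    Nat.rec ⟨univ, isOpen_univ, univ_nonempty⟩ (fun n U => W n U (f n)) n
  have hT : ∀ f n, T f (n + 1) = W n (T f n) (f n) := fun f n => rfl
  have hx : ∀ f, ∃ x, ∀ n, x ∈ closure (T f n).1 := by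
    intro f
    obtain ⟨x, hx⟩ := IsCompact.nonempty_iInter_of_sequence_nonempty_isCompact_isClosed
      (fun n => closure (T f n).1)
      (fun n => by rw [hT]; exact (hWU _ _ _).trans subset_closure)
      (fun n => (T f n).2.2.closure) isClosed_closure.isCompact (fun n => isClosed_closure)
    exact ⟨x, mem_iInter.1 hx⟩
  choose x hx using hx
  refine mk_le_of_injective (f := x) fun f g hfg => ?_
  have key : ∀ n, T f n = T g n := by
    intro n
    induction n with
    | zero => rfl
    | succ n he =>
      by_contra hn
      rw [hT, hT, he] at hn
      have hfgn : f n ≠ g n := fun e => hn (by rw [e])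
      have h1 := hx f (n + 1)
      have h2 := hx g (n + 1)
      rw [hT, he, hfg] at h1
      rw [hT] at h2
      exact Set.disjoint_left.1 (hWd n (T g n) _ _ hfgn) h1 h2
  funext n
  by_contra hne
  have h1 := hx f (n + 1)
  have h2 := hx g (n + 1)
  rw [hT, key n, hfg] at h1
  rw [hT] at h2
  exact Set.disjoint_left.1 (hWd n (T g n) _ _ hne) h1 h2

/-! ### Countable powers of limit cardinals -/

/-- For an infinite limit cardinal `κ`, any upper bound `μ` of the countable products of cardinals
below `κ` is an upper bound of `κ ^ ℵ₀`. -/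
theorem power_aleph0_le_of_prod_le {κ μ : Cardinal.{u}} (hκ : ℵ₀ ≤ κ)
    (hlim : ∀ θ < κ, succ θ < κ)
    (h : ∀ K : ℕ → Type u, (∀ n, #(K n) < κ) → #(∀ n, K n) ≤ μ) : κ ^ ℵ₀ ≤ μ := by
  let T : Type u := κ.ord.ToType
  have hT : #T = κ := mk_ord_toType _
  have hIio : ∀ b : T, #(Iio b) < κ := fun b => by
    simpa [hT] using mk_Iio_lt b (by simp [T])
  have hpow : ∀ θ < κ, θ ^ ℵ₀ ≤ μ := by
    intro θ hθ
    have := h (fun _ => θ.out) (fun _ => by rwa [mk_out])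
    simpa using this
  have hκμ : κ ≤ μ := by
    by_contra! hlt
    have h1 := hpow _ (hlim μ hlt)
    have h2 : succ μ ≤ succ μ ^ ℵ₀ := self_le_power _ one_le_aleph0
    exact (lt_succ μ).not_ge (h2.trans h1)
  by_cases hb : ∀ f : ℕ → T, ∃ b, ∀ n, f n < b
  -- Uncountable cofinality: every sequence in `κ` is bounded.
  · choose b hb using hb
    have h1 : #(ℕ → T) ≤ #(Σ b : T, ℕ → Iio b) :=
      mk_le_of_injective (f := fun f => ⟨b f, fun n => ⟨f n, hb f n⟩⟩) (by
        have : Function.LeftInverse (fun (p : Σ b : T, ℕ → Iio b) (n : ℕ) => (p.2 n : T))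
          (fun f => ⟨b f, fun n => ⟨f n, hb f n⟩⟩) := fun f => rfl
        exact this.injective)
    have h2 : #(ℕ → T) = κ ^ ℵ₀ := by simp [hT]
    rw [← h2]
    refine h1.trans ?_
    rw [mk_sigma]
    calc (sum fun b : T => #(ℕ → Iio b)) ≤ sum fun _ : T => μ :=
          sum_le_sum _ _ fun b => h _ fun _ => hIio b
      _ = #T * μ := by simp
      _ ≤ μ := mul_le_of_le (hκ.trans hκμ) (hT.le.trans hκμ) le_rfl
  -- Countable cofinality: by König's theorem `κ` is at most a countable product of smaller
  -- cardinals, and so is then `κ ^ ℵ₀`.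
  · push Not at hb
    obtain ⟨f, hf⟩ := hb
    have hsucc : ∀ n, #(Iic (f n)) < κ := fun n => by
      refine lt_of_le_of_lt ?_ (hlim _ (hIio (f n)))
      rw [← Iio_insert]
      exact mk_insert_le.trans (add_one_le_of_lt (lt_succ _))
    let K : ℕ → Type u := fun n => (succ #(Iic (f n))).out
    have hK : ∀ n, #(K n) < κ := fun n => by
      simp only [K, mk_out]; exact hlim _ (hsucc n)
    have h1 : κ ≤ #(∀ n, K n) := by
      have hu : (⋃ n, Iic (f n)) = Set.univ := by
        rw [eq_univ_iff_forall]
        intro b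
        obtain ⟨n, hn⟩ := hf b
        exact mem_iUnion.2 ⟨n, hn⟩
      have h3 : κ ≤ sum fun n => #(Iic (f n)) := by
        have := mk_iUnion_le_sum_mk_lift (f := fun n => Iic (f n))
        rw [hu, mk_univ, hT] at this
        simpa using this
      refine h3.trans ((sum_lt_prod _ (fun n => succ #(Iic (f n))) fun n => lt_succ _).le.trans ?_)
      simp [mk_pi, K]
    calc κ ^ ℵ₀ ≤ #(∀ n, K n) ^ ℵ₀ := power_le_power_right h1
      _ = #(ℕ → ∀ n, K n) := by simp
      _ ≤ #(∀ q : ℕ, K (Nat.unpair q).2) := by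
          refine mk_le_of_injective
            (f := fun g (q : ℕ) => g (Nat.unpair q).1 (Nat.unpair q).2) fun g g' hgg => ?_
          funext m n
          have hmn := congrFun hgg (Nat.pair m n)
          beta_reduce at hmn
          rwa [Nat.unpair_pair] at hmn
      _ ≤ μ := h _ fun q => hK _

/-! ### Compact linearly ordered spaces -/

/-- If, in a compact linearly ordered space, the nonempty open convex sets are infinite and, for
`κ` uncountable, have density at least `κ`, then each of them contains `θ` disjoint nonempty open
sets for every `θ < κ`, so the space has at least `κ ^ ℵ₀` points. Finite `θ` only needs the
Hausdorff property, which is how `κ = ℵ₀` is covered. -/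
theorem power_aleph0_le_mk {X : Type u} [LinearOrder X] [TopologicalSpace X] [OrderTopology X]
    [CompactSpace X] [Nonempty X] {κ : Cardinal.{u}} (hκ : ℵ₀ ≤ κ) (hlim : ∀ θ < κ, succ θ < κ)
    (h : ∀ C : Set X, IsOpen C → C.Nonempty → C.OrdConnected → C.Infinite ∧
      ∀ D : Set C, Dense D → ℵ₀ < κ → κ ≤ #D) :
    κ ^ ℵ₀ ≤ #X := by
  refine power_aleph0_le_of_prod_le hκ hlim fun K hK => prod_le_mk_of_cellular K ?_
  rintro n U hU ⟨p, hp⟩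
  set C := ordConnectedComponent U p with hC
  have hCU : C ⊆ U := ordConnectedComponent_subset
  have hCo : IsOpen C := isOpen_ordConnectedComponent hU p
  have hCc : C.OrdConnected := inferInstanceAs (ordConnectedComponent U p).OrdConnected
  obtain ⟨hinf, hdense⟩ := h C hCo ⟨p, self_mem_ordConnectedComponent.2 hp⟩ hCc
  suffices hs : ∃ W : K n → Set C, (∀ k, IsOpen (W k)) ∧ (∀ k, (W k).Nonempty) ∧
      Pairwise (fun k l => Disjoint (W k) (W l)) by
    obtain ⟨W, hWo, hWn, hWd⟩ := hs
    refine ⟨fun k => Subtype.val '' W k, fun k => hCo.isOpenMap_subtype_val _ (hWo k),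
      fun k => (hWn k).image _, fun k => ?_, fun k l hkl => ?_⟩
    · rintro _ ⟨y, -, rfl⟩
      exact hCU y.2
    · exact (disjoint_image_iff Subtype.val_injective).2 (hWd hkl)
  rcases lt_or_ge #(K n) ℵ₀ with hfin | hinfK
  · have : Finite (K n) := lt_aleph0_iff_finite.1 hfin
    have : Infinite C := hinf.to_subtype
    have hle : #(K n) ≤ #C := hfin.le.trans (aleph0_le_mk C)
    obtain ⟨e⟩ := hle
    obtain ⟨V, hV, hVd⟩ := (finite_range e).t2_separation
    exact ⟨fun k => V (e k), fun k => (hV _).2, fun k => ⟨_, (hV _).1⟩, fun k l hkl =>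
      hVd (mem_range_self k) (mem_range_self l) (e.injective.ne hkl)⟩
  · by_contra hno
    obtain ⟨D, hD, hDc⟩ := exists_dense_mk_le (X := C) hinfK (by
      intro L W hWo hWn hWd
      by_contra! hlt
      obtain ⟨e⟩ := hlt.le
      exact hno ⟨fun k => W (e k), fun k => hWo _, fun k => hWn _,
        fun k l hkl => hWd (e.injective.ne hkl)⟩)
    exact (hDc.trans_lt (hlim _ (hK n))).not_ge (hdense D hD (hinfK.trans_lt (hK n)))

end

/-- (i) If `κ` is a strong limit with `κ ^ ℵ₀ > κ` then there is no compact linearly ordered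
space of size `κ` in which all nonempty open sets are equipollent.  (ii) If `κ` is singular
then there is no linearly ordered continuum `X` with `ŵ(X) = κ` and `|X| < κ ^ ℵ₀`. -/
theorem no_balanced_ordered_compacta (κ : Cardinal.{u}) (hκ : ℵ₀ ≤ κ) :
    (((∀ θ : Cardinal.{u}, θ < κ → 2 ^ θ < κ) ∧ κ < κ ^ ℵ₀) →
      ¬ ∃ X : TopCat.{u}, IsLOTS ↥X ∧ CompactSpace ↥X ∧ #↥X = κ ∧
        ∀ U V : Set ↥X, IsOpen U → U.Nonempty → IsOpen V → V.Nonempty → #U = #V) ∧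
    (κ.ord.cof < κ →
      ¬ ∃ X : TopCat.{u}, IsLOTS ↥X ∧ IsContinuum ↥X ∧ hatWt ↥X = κ ∧ #↥X < κ ^ ℵ₀) := by
  constructor
  · rintro ⟨hsl, hpow⟩ ⟨X, ⟨l, hl⟩, hcomp, hcard, heq⟩
    have hne : Nonempty X := by
      rw [← mk_ne_zero_iff, hcard]
      exact (aleph0_pos.trans_le hκ).ne'
    refine hpow.not_ge ((power_aleph0_le_mk hκ (fun θ hθ =>
      (Order.succ_le_of_lt (cantor θ)).trans_lt (hsl θ hθ)) fun C hCo hCn hCc => ?_).trans hcard.le)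
    have hC : #C = κ := by
      rw [heq C Set.univ hCo hCn isOpen_univ Set.univ_nonempty, mk_univ, hcard]
    refine ⟨Set.infinite_coe_iff.1 (infinite_iff.2 (hκ.trans hC.ge)), fun D hD _ => ?_⟩
    by_contra! hlt
    exact ((mk_le_of_dense hD).trans_lt (hsl _ (hsl _ hlt))).ne hC
  · rintro hsing ⟨X, ⟨l, hl⟩, ⟨hcomp, hconn, -, hnt⟩, hw, hcard⟩
    have hω : ℵ₀ < κ := hκ.lt_of_ne (by
      rintro rfl
      exact hsing.ne isRegular_aleph0.cof_ord)
    have hlim : ∀ θ < κ, Order.succ θ < κ := by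
      intro θ hθ
      refine (Order.succ_le_of_lt hθ).lt_of_ne ?_
      rintro rfl
      have hθ' : ℵ₀ ≤ θ := Order.le_of_lt_succ hω
      exact hsing.ne (isRegular_succ hθ').cof_ord
    have : DenselyOrdered X := denselyOrdered_of_connected
    refine hcard.not_ge (power_aleph0_le_mk hκ hlim fun C hCo hCn hCc => ?_)
    have hCw : κ ≤ wt C := hw ▸ csInf_le' ⟨C, hCo, hCn, rfl⟩
    have hD : ∀ D : Set C, Dense D → κ ≤ #D := by
      intro D hD
      have := hCw.trans (wt_le_of_dense hD)
      exact (le_max_iff.1 this).resolve_left hω.not_ge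
    refine ⟨fun hfin => ?_, fun D hd _ => hD D hd⟩
    have h1 := hD Set.univ dense_univ
    rw [mk_univ] at h1
    exact (h1.trans (lt_aleph0_iff_finite.2 hfin.to_subtype).le).not_gt hω
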